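/- arXiv:2006.02042 — 4 statements merged into one kernel-verified Lean document; each statement's English description precedes it below -/
import Mathlib

section
/- Let b₀ be any element of ℂ(t,M) and define p₁ = a₁(t,M)·b₀ + a₀(t,t²M)/a₁(t,t²M), p₋₁ = a₋₁(t,M)·b₀ + a₀(t,t⁻²M)/a₋₁(t,t⁻²M), and p₀ = a₀(t,M)·b₀ + a₁(t,t⁻²M)/a₋₁(t,t⁻²M) + a₋₁(t,t²M)/a₁(t,t²M) in ℂ(t,M). Then the two equations p₁(t,M) = p₋₁(t,M⁻¹) and p₀(t,M) = p₀(t,M⁻¹) hold simultaneously if and only if b₀(t,M⁻¹) = −b₀(t,M). -/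
/-!
The inversion `M ↦ M⁻¹` exchanges `a₁` with `-a₋₁`, negates `a₀`, and exchanges the shifts
`M ↦ t²M` and `M ↦ t⁻²M`. Hence the fractions occurring in `p₁` and `p₋₁` correspond to each
other, the two fractions in `p₀` are swapped, and
`p₁(t,M) - p₋₁(t,M⁻¹) = a₁ (b₀(t,M) + b₀(t,M⁻¹))`,
`p₀(t,M) - p₀(t,M⁻¹) = a₀ (b₀(t,M) + b₀(t,M⁻¹))`.
Since `a₁ ≠ 0`, the first condition is already equivalent to `b₀(t,M⁻¹) = -b₀(t,M)`, and the
second follows from it.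
-/

noncomputable section

/-- The Laurent polynomial ring `ℂ[t^{±1}, M^{±1}]`, realized as the group algebra of `ℤ × ℤ`
over `ℂ`.  The element `mon a b` below is the monomial `t^a * M^b`. -/
abbrev R2 : Type := AddMonoidAlgebra ℂ (ℤ × ℤ)

instance : IsDomain R2 := NoZeroDivisors.to_isDomain _

/-- The monomial `t^a * M^b` in `ℂ[t^{±1}, M^{±1}]`. -/
def mon (a b : ℤ) : R2 := AddMonoidAlgebra.single (a, b) (1 : ℂ)
/-- The exponent map corresponding to the substitution `(t, M) ↦ (t, t²M)`. -/
def eU : (ℤ × ℤ) ≃+ (ℤ × ℤ) where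
  toFun p := (p.1 + 2 * p.2, p.2)
  invFun p := (p.1 - 2 * p.2, p.2)
  left_inv p := by ext <;> simp
  right_inv p := by ext <;> simp
  map_add' p q := by ext <;> simp <;> ring

/-- The exponent map corresponding to the substitution `(t, M) ↦ (t, t⁻²M)`. -/
def eD : (ℤ × ℤ) ≃+ (ℤ × ℤ) where
  toFun p := (p.1 - 2 * p.2, p.2)
  invFun p := (p.1 + 2 * p.2, p.2)
  left_inv p := by ext <;> simp
  right_inv p := by ext <;> simp
  map_add' p q := by ext <;> simp <;> ring

/-- The exponent map corresponding to the substitution `(t, M) ↦ (t, M⁻¹)`. -/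
def eI : (ℤ × ℤ) ≃+ (ℤ × ℤ) where
  toFun p := (p.1, -p.2)
  invFun p := (p.1, -p.2)
  left_inv p := by ext <;> simp
  right_inv p := by ext <;> simp
  map_add' p q := by ext <;> simp <;> ring

/-- The substitution automorphism `F(t, M) ↦ F(t, t²M)` of `ℂ[t^{±1}, M^{±1}]`. -/
def sU : R2 ≃ₐ[ℂ] R2 := AddMonoidAlgebra.domCongr ℂ ℂ eU

/-- The substitution automorphism `F(t, M) ↦ F(t, t⁻²M)` of `ℂ[t^{±1}, M^{±1}]`. -/
def sD : R2 ≃ₐ[ℂ] R2 := AddMonoidAlgebra.domCongr ℂ ℂ eD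

/-- The substitution automorphism `F(t, M) ↦ F(t, M⁻¹)` of `ℂ[t^{±1}, M^{±1}]`. -/
def sI : R2 ≃ₐ[ℂ] R2 := AddMonoidAlgebra.domCongr ℂ ℂ eI
/-- `a₁(t,M) = t⁻²M² − t²M⁻²`. -/
def a1 : R2 := mon (-2) 2 - mon 2 (-2)

/-- `a₋₁(t,M) = t²M² − t⁻²M⁻²`. -/
def am1 : R2 := mon 2 2 - mon (-2) (-2)

/-- `a₀(t,M) = (M² − M⁻²)(−M⁴ − M⁻⁴ + M² + M⁻² + t⁴ + t⁻⁴)`. -/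
def a0 : R2 :=
  (mon 0 2 - mon 0 (-2)) *
    (-(mon 0 4) - mon 0 (-4) + mon 0 2 + mon 0 (-2) + mon 4 0 + mon (-4) 0)

/-- `A₁(t,M) = −a₁(t,M)·a₁(t,t²M)·a₋₁(t,t⁻²M)`. -/
def A1 : R2 := -(a1 * sU a1 * sD am1)

/-- `B₁(t,M) = a₀(t,M)·a₁(t,t²M)·a₋₁(t,t⁻²M)`. -/
def B1 : R2 := a0 * sU a1 * sD am1

/-- `C₁(t,M) = −a₁(t,M)·a₁(t,t⁻²M)·a₁(t,t²M) + a₀(t,M)·a₀(t,t²M)·a₋₁(t,t⁻²M)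
    − a₁(t,M)·a₋₁(t,t⁻²M)·a₋₁(t,t²M)`. -/
def C1 : R2 := -(a1 * sD a1 * sU a1) + a0 * sU a0 * sD am1 - a1 * sD am1 * sU am1
/-- The fraction field `ℂ(t, M)` of the Laurent polynomial ring `ℂ[t^{±1}, M^{±1}]`. -/
abbrev K2 : Type := FractionRing R2

/-- The canonical inclusion `ℂ[t^{±1}, M^{±1}] → ℂ(t, M)`. -/
def ι : R2 →+* K2 := algebraMap R2 K2

/-- The substitution automorphism of `ℂ(t,M)` fixing `t` and sending `M` to `M⁻¹`. -/
def σI : K2 ≃+* K2 := IsFractionRing.ringEquivOfRingEquiv (sI : R2 ≃+* R2)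

lemma mul_add_eq_map_mul_add_iff {F R : Type*} [NonUnitalNonAssocRing R] [FunLike F R R]
    [NonUnitalRingHomClass F R R] (σ : F) {a a' r r' : R} (b : R)
    (ha : σ a' = -a) (hr : σ r' = r) :
    a * b + r = σ (a' * b + r') ↔ a * (b + σ b) = 0 := by
  rw [map_add, map_mul, ha, hr, add_left_inj, neg_mul, eq_neg_iff_add_eq_zero, mul_add]

lemma mon_inj {a b c d : ℤ} : mon a b = mon c d ↔ a = c ∧ b = d :=
  (AddMonoidAlgebra.single_left_inj one_ne_zero).trans Prod.mk_inj

lemma sI_mon (a b : ℤ) : sI (mon a b) = mon a (-b) := by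
  simp [sI, mon, eI]

lemma eD_trans_eI : eD.trans eI = eI.trans eU := by
  ext p <;> simp [eD, eI, eU, sub_eq_add_neg]

lemma eU_trans_eI : eU.trans eI = eI.trans eD := by
  ext p <;> simp [eU, eI, eD]

lemma sI_sD (x : R2) : sI (sD x) = sU (sI x) := by
  suffices h : sD.trans sI = sI.trans sU from DFunLike.congr_fun h x
  simp only [sI, sD, sU, AddMonoidAlgebra.trans_domCongr_domCongr, eD_trans_eI]

lemma sI_sU (x : R2) : sI (sU x) = sD (sI x) := by
  suffices h : sU.trans sI = sI.trans sD from DFunLike.congr_fun h x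
  simp only [sI, sD, sU, AddMonoidAlgebra.trans_domCongr_domCongr, eU_trans_eI]

lemma sI_a1 : sI a1 = -am1 := by
  simp [a1, am1, sI_mon]

lemma sI_am1 : sI am1 = -a1 := by
  simp [a1, am1, sI_mon]

lemma sI_a0 : sI a0 = -a0 := by
  simp only [a0, map_mul, map_sub, map_add, map_neg, sI_mon, neg_neg, neg_zero]
  ring

lemma a1_ne_zero : a1 ≠ 0 := by
  simp [a1, sub_ne_zero, mon_inj]

lemma ι_injective : Function.Injective ι :=
  IsFractionRing.injective R2 K2

lemma σI_ι (x : R2) : σI (ι x) = ι (sI x) := by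
  simp [σI, ι]

lemma σI_sD_div_sD (x y : R2) :
    σI (ι (sD x) / ι (sD y)) = ι (sU (sI x)) / ι (sU (sI y)) := by
  rw [map_div₀, σI_ι, σI_ι, sI_sD, sI_sD]

lemma σI_sU_div_sU (x y : R2) :
    σI (ι (sU x) / ι (sU y)) = ι (sD (sI x)) / ι (sD (sI y)) := by
  rw [map_div₀, σI_ι, σI_ι, sI_sU, sI_sU]

/-- The symmetric conditions `p₁(t,M) = p₋₁(t,M⁻¹)` and `p₀(t,M) = p₀(t,M⁻¹)` hold
simultaneously if and only if `b₀(t,M⁻¹) = −b₀(t,M)`. -/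
theorem symmetric_conditions_iff (b0 p1 pm1 p0 : K2)
    (hp1 : p1 = ι a1 * b0 + ι (sU a0) / ι (sU a1))
    (hpm1 : pm1 = ι am1 * b0 + ι (sD a0) / ι (sD am1))
    (hp0 : p0 = ι a0 * b0 + ι (sD a1) / ι (sD am1) + ι (sU am1) / ι (sU a1)) :
    (p1 = σI pm1 ∧ p0 = σI p0) ↔ σI b0 = -b0 := by
  have p1_symm_iff : p1 = σI pm1 ↔ ι a1 * (b0 + σI b0) = 0 := by
    rw [hp1, hpm1]
    apply mul_add_eq_map_mul_add_iff
    · rw [σI_ι, sI_am1, map_neg]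
    · simp only [σI_sD_div_sD, sI_a0, sI_am1, map_neg, neg_div_neg_eq]
  have p0_symm_iff : p0 = σI p0 ↔ ι a0 * (b0 + σI b0) = 0 := by
    rw [hp0, add_assoc]
    apply mul_add_eq_map_mul_add_iff
    · rw [σI_ι, sI_a0, map_neg]
    · simp only [map_add, σI_sD_div_sD, σI_sU_div_sU, sI_a1, sI_am1, map_neg, neg_div_neg_eq,
        add_comm]
  have ι_a1_ne_zero : ι a1 ≠ 0 := (map_ne_zero_iff ι ι_injective).mpr a1_ne_zero
  rw [p1_symm_iff, p0_symm_iff, mul_eq_zero_iff_left ι_a1_ne_zero, eq_neg_iff_add_eq_zero,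
    add_comm (σI b0), and_iff_left_of_imp]
  exact mul_eq_zero_of_right (ι a0)
end
end

section
/- There exist Laurent polynomials p₀, p₁ ∈ ℂ[t^{±1}, M^{±1}] such that A₁(t,M)·p₀ + B₁(t,M)·p₁ = C₁(t,M); equivalently, C₁ lies in the ideal of ℂ[t^{±1}, M^{±1}] generated by A₁ and B₁. -/
/-!
Write `[g] = e^g - e^(-g)` in a group algebra, and let `g`, `h` be the exponents of `M²`, `t²`. Then
`a₁ = [g - h]`, `a₋₁ = [g + h]`, and `(t, M) ↦ (t, t²M)` replaces `g` by `g + 2h`; in particular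
it takes `a₁` to `a₋₁`. The identity `[g - h][g + h] = [g]² - [h]²` turns `a₀` into
`[2g] - [g][g - h][g + h]`, so `a₀ ≡ [2h]` modulo `a₁`. Replacing `g` by `-g`, which negates `a₀`,
gives `a₀ ≡ -[2h]` modulo `a₋₁`, and replacing it by `g + 2h` gives `a₀(t, t²M) ≡ [2h]` modulo
`a₋₁`.

Since `a₁ a₋₁(t, t²M) = a₋₁² - [2h]²`, the difference `a₀ a₀(t, t²M) - a₁ a₋₁(t, t²M)` is `a₋₁`
times an element of the ideal `(a₋₁, [2h])`. The elements `x` with `[x]` in a given ideal form a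
subgroup, so `(a₁, [2h])` contains both `a₋₁` and `a₁(t, t⁻²M) = [g - 3h]`. As
`(a₁, [2h]) = (a₁, a₀)`, dividing `C₁` by `a₁ a₋₁` leaves an element of `(a₁, a₀)`, while `A₁` and
`B₁` leave `-a₁` and `a₀`.
-/

noncomputable section

section CommRing

open Ideal

variable {S : Type*} [CommRing S]

theorem mul_add_sq_mem_span_mul_span_pair {a d z w : S} (hz : a ∣ z + d) (hw : a ∣ w - d) :
    z * w + d ^ 2 ∈ span {a} * span {a, d} := by
  obtain ⟨e, he⟩ := hz
  obtain ⟨f, hf⟩ := hw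
  refine mem_span_singleton_mul.mpr
    ⟨e * f * a + (e - f) * d, mem_span_pair.mpr ⟨_, _, rfl⟩, ?_⟩
  linear_combination -w * he - (a * e - d) * hf

theorem span_pair_eq_of_dvd_sub {a x y : S} (h : a ∣ x - y) : span {a, x} = span {a, y} := by
  obtain ⟨c, hc⟩ := h
  rw [sub_eq_iff_eq_add.mp hc, span_pair_left_mul_add]

theorem exists_mul_add_mul_eq_of_congruences {a a' b c d z w : S}
    (hza : a ∣ z - d) (hza' : a' ∣ z + d) (hw : a' ∣ w - d) (hc : a * c = a' ^ 2 - d ^ 2)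
    (ha' : a' ∈ span {a, d}) (hb : b ∈ span {a, d}) :
    ∃ p q : S, -(a * a' * a) * p + z * a' * a * q = -(a * b * a') + z * w * a - a * a * c := by
  have hd : d ∈ span {a, d} := subset_span (by simp)
  have hle : span {a', d} ≤ span {a, d} := span_le.mpr (Set.pair_subset ha' hd)
  have hzw : z * w + d ^ 2 ∈ span {a'} * span {a, d} :=
    mul_mono_right hle (mul_add_sq_mem_span_mul_span_pair hza' hw)
  obtain ⟨k, hk, hak⟩ := mem_span_singleton_mul.mp hzw
  have hmem : k - a' - b ∈ span {a, z} := by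
    rw [span_pair_eq_of_dvd_sub hza]
    exact sub_mem (sub_mem hk ha') hb
  obtain ⟨p, q, hpq⟩ := mem_span_pair.mp hmem
  exact ⟨-p, q, by linear_combination a * a' * hpq + a * hak + a * hc⟩

end CommRing

section GroupAlgebra

open AddMonoidAlgebra

variable (k : Type*) {G H : Type*} [CommRing k] [AddCommGroup G] [AddCommGroup H]

theorem single_add_eq_mul (g h : G) :
    (single (g + h) 1 : AddMonoidAlgebra k G) = single g 1 * single h 1 := by
  rw [single_mul_single, mul_one]

theorem single_mul_single_neg (g : G) :
    (single g 1 * single (-g) 1 : AddMonoidAlgebra k G) = 1 := by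
  rw [← single_add_eq_mul, add_neg_cancel, one_def]

/-- The antisymmetrized monomial `[g] = e^g - e^(-g)` of a group algebra, the numerator of a
quantum integer; `e^g` is `single g 1`. -/
def qBracket (g : G) : AddMonoidAlgebra k G := single g 1 - single (-g) 1

theorem qBracket_neg (g : G) : qBracket k (-g) = -qBracket k g := by
  rw [qBracket, qBracket, neg_neg, neg_sub]

theorem qBracket_add (g h : G) :
    qBracket k (g + h) = single h 1 * qBracket k g + single (-g) 1 * qBracket k h := by
  simp only [qBracket, neg_add, single_add_eq_mul]
  ring

theorem qBracket_two_nsmul (g : G) :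
    qBracket k (2 • g) = qBracket k g * (single g 1 + single (-g) 1) := by
  rw [two_nsmul, qBracket_add]
  ring

theorem qBracket_sub_mul_qBracket_add (g h : G) :
    qBracket k (g - h) * qBracket k (g + h) = qBracket k g ^ 2 - qBracket k h ^ 2 := by
  simp only [qBracket, sub_eq_add_neg, neg_add, neg_neg, single_add_eq_mul]
  linear_combination
    (single g 1 ^ 2 + single (-g) 1 ^ 2 - 2) * single_mul_single_neg k h -
    (single h 1 ^ 2 + single (-h) 1 ^ 2 - 2) * single_mul_single_neg k g

theorem qBracket_sq (g : G) :
    qBracket k g ^ 2 = single (2 • g) 1 + single (-(2 • g)) 1 - 2 := by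
  simp only [qBracket, two_nsmul, neg_add, single_add_eq_mul]
  linear_combination -2 * single_mul_single_neg k g

theorem qBracket_sub_dvd_qBracket_two_nsmul_sub (g h : G) :
    qBracket k (g - h) ∣ qBracket k (2 • g) - qBracket k (2 • h) := by
  refine ⟨single (g + h) 1 + single (-(g + h)) 1, ?_⟩
  simp only [qBracket, two_nsmul, sub_eq_add_neg, neg_add, neg_neg, single_add_eq_mul]
  linear_combination
    (single h 1 ^ 2 - single (-h) 1 ^ 2) * single_mul_single_neg k g -
    (single g 1 ^ 2 - single (-g) 1 ^ 2) * single_mul_single_neg k h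

theorem domCongr_qBracket (e : G ≃+ H) (g : G) :
    domCongr k k e (qBracket k g) = qBracket k (e g) := by
  simp only [qBracket, map_sub, domCongr_single, map_neg]

variable {k}

theorem qBracket_add_mem {I : Ideal (AddMonoidAlgebra k G)} {g h : G}
    (hg : qBracket k g ∈ I) (hh : qBracket k h ∈ I) : qBracket k (g + h) ∈ I := by
  rw [qBracket_add]
  exact I.add_mem (I.mul_mem_left _ hg) (I.mul_mem_left _ hh)

theorem qBracket_sub_mem {I : Ideal (AddMonoidAlgebra k G)} {g h : G}
    (hg : qBracket k g ∈ I) (hh : qBracket k h ∈ I) : qBracket k (g - h) ∈ I := by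
  rw [sub_eq_add_neg]
  exact qBracket_add_mem hg (by rwa [qBracket_neg, neg_mem_iff])

variable (k)

/-- The coefficient `a₀` with `M²` and `t²` replaced by the monomials `e^g` and `e^h` of an
arbitrary group algebra. -/
def middleCoeff (g h : G) : AddMonoidAlgebra k G :=
  qBracket k g *
    (-single (2 • g) 1 - single (-(2 • g)) 1 + single g 1 + single (-g) 1 +
      single (2 • h) 1 + single (-(2 • h)) 1)

theorem middleCoeff_eq (g h : G) :
    middleCoeff k g h =
      qBracket k (2 • g) - qBracket k g * (qBracket k (g - h) * qBracket k (g + h)) := by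
  rw [middleCoeff, qBracket_sub_mul_qBracket_add, qBracket_sq, qBracket_sq, qBracket_two_nsmul]
  ring

theorem middleCoeff_neg (g h : G) : middleCoeff k (-g) h = -middleCoeff k g h := by
  simp only [middleCoeff, qBracket_neg, smul_neg, neg_neg]
  ring

theorem qBracket_sub_dvd_middleCoeff_sub (g h : G) :
    qBracket k (g - h) ∣ middleCoeff k g h - qBracket k (2 • h) := by
  rw [middleCoeff_eq, sub_right_comm]
  exact dvd_sub (qBracket_sub_dvd_qBracket_two_nsmul_sub k g h)
    (dvd_mul_of_dvd_right (dvd_mul_right _ _) _)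

theorem qBracket_add_dvd_middleCoeff_add (g h : G) :
    qBracket k (g + h) ∣ middleCoeff k g h + qBracket k (2 • h) := by
  have hneg := qBracket_sub_dvd_middleCoeff_sub k (-g) h
  rwa [middleCoeff_neg, ← neg_add', qBracket_neg, ← neg_add', neg_dvd, dvd_neg] at hneg

theorem qBracket_add_dvd_middleCoeff_shift_sub (g h : G) :
    qBracket k (g + h) ∣ middleCoeff k (g + 2 • h) h - qBracket k (2 • h) := by
  have hshift : g + 2 • h - h = g + h := by abel
  rw [← hshift]
  exact qBracket_sub_dvd_middleCoeff_sub k (g + 2 • h) h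

theorem domCongr_middleCoeff (e : G ≃+ H) (g h : G) :
    domCongr k k e (middleCoeff k g h) = middleCoeff k (e g) (e h) := by
  simp only [middleCoeff, map_mul, map_add, map_sub, map_neg, domCongr_qBracket,
    domCongr_single, map_nsmul]

theorem diophantine_solvable_general (g h : G) :
    ∃ p0 p1 : AddMonoidAlgebra k G,
      -(qBracket k (g - h) * qBracket k (g + h) * qBracket k (g - h)) * p0 +
          middleCoeff k g h * qBracket k (g + h) * qBracket k (g - h) * p1 =
        -(qBracket k (g - h) * qBracket k (g - 3 • h) * qBracket k (g + h)) +
          middleCoeff k g h * middleCoeff k (g + 2 • h) h * qBracket k (g - h) -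
          qBracket k (g - h) * qBracket k (g - h) * qBracket k (g + 3 • h) := by
  have hprod : qBracket k (g - h) * qBracket k (g + 3 • h) =
      qBracket k (g + h) ^ 2 - qBracket k (2 • h) ^ 2 := by
    rw [← qBracket_sub_mul_qBracket_add]
    congr 2 <;> abel
  have h_sub_mem : qBracket k (g - h) ∈ Ideal.span {qBracket k (g - h), qBracket k (2 • h)} :=
    Ideal.subset_span (by simp)
  have h_two_mem : qBracket k (2 • h) ∈ Ideal.span {qBracket k (g - h), qBracket k (2 • h)} :=
    Ideal.subset_span (by simp)
  have hadd : g + h = g - h + 2 • h := by abel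
  have hsub : g - 3 • h = g - h - 2 • h := by abel
  exact exists_mul_add_mul_eq_of_congruences
    (qBracket_sub_dvd_middleCoeff_sub k g h) (qBracket_add_dvd_middleCoeff_add k g h)
    (qBracket_add_dvd_middleCoeff_shift_sub k g h) hprod
    (hadd ▸ qBracket_add_mem h_sub_mem h_two_mem) (hsub ▸ qBracket_sub_mem h_sub_mem h_two_mem)

end GroupAlgebra

section Coefficients

theorem a1_eq_qBracket : a1 = qBracket ℂ ((0, 2) - (2, 0)) := rfl

theorem am1_eq_qBracket : am1 = qBracket ℂ ((0, 2) + (2, 0)) := rfl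

theorem a0_eq_middleCoeff : a0 = middleCoeff ℂ (0, 2) (2, 0) := by
  rw [middleCoeff, qBracket]
  rfl

theorem sU_a1 : sU a1 = qBracket ℂ ((0, 2) + (2, 0)) := by
  rw [a1_eq_qBracket, sU, domCongr_qBracket]
  rfl

theorem sD_a1 : sD a1 = qBracket ℂ ((0, 2) - 3 • (2, 0)) := by
  rw [a1_eq_qBracket, sD, domCongr_qBracket]
  rfl

theorem sU_am1 : sU am1 = qBracket ℂ ((0, 2) + 3 • (2, 0)) := by
  rw [am1_eq_qBracket, sU, domCongr_qBracket]
  rfl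

theorem sD_am1 : sD am1 = qBracket ℂ ((0, 2) - (2, 0)) := by
  rw [am1_eq_qBracket, sD, domCongr_qBracket]
  rfl

theorem sU_a0 : sU a0 = middleCoeff ℂ ((0, 2) + 2 • (2, 0)) (2, 0) := by
  have hg : eU (0, 2) = (0, 2) + 2 • (2, 0) := rfl
  have hh : eU (2, 0) = (2, 0) := rfl
  rw [a0_eq_middleCoeff, sU, domCongr_middleCoeff, hg, hh]

end Coefficients

/-- There exist Laurent polynomials `p₀, p₁ ∈ ℂ[t^{±1}, M^{±1}]` with `A₁p₀ + B₁p₁ = C₁`;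
equivalently, `C₁` lies in the ideal generated by `A₁` and `B₁`. -/
theorem diophantine_solvable : ∃ p0 p1 : R2, A1 * p0 + B1 * p1 = C1 := by
  rw [A1, B1, C1, sU_a1, sD_a1, sU_am1, sD_am1, sU_a0, a1_eq_qBracket, a0_eq_middleCoeff]
  exact diophantine_solvable_general ℂ (0, 2) (2, 0)
end
end

section
/- Each of the four polynomials g₁ = −M¹⁴(M⁸ − 1)(t⁴ + M⁸t⁴ − M⁴(1 + t⁸)), g₂ = −M¹⁰(M⁸ − 1)t²(t⁴ + M⁸t⁴ − M⁴(1 + t⁸)), g₃ = (M⁴ − 1)(M − t)(M + t)(Mt − 1)(Mt + 1)(M² + t²)(1 + M²t²)(M⁴ + M⁶ + M⁸ + 2M¹⁰ + 3M¹² + M¹⁴ + 2M¹⁶ − t⁴), and g₄ = t²(t − M)(M + t)(Mt − 1)(Mt + 1)(M² + t²)(1 + M²t²)(−M⁴ − M⁶ − M⁸ + M¹⁴ + M¹⁶ + t⁴) lies in the ideal of the polynomial ring ℂ[t, M] generated by A₂ and B₂. -/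
/-!
Clearing denominators gives `A₂ = P a` and `B₂ = P b` in `ℂ[t, M]`, where
`P = (M⁴ - t⁴)(t⁴M⁴ - 1)` and `a = t²M⁴(t⁴ - M⁴)`. Each `gᵢ` is also divisible by `P`, so it
suffices to show `gᵢ / P ∈ (a, b)`.

Modulo `a`, a factor `t²M⁴` allows `t⁴` to be replaced by `M⁴`. This lowers the degree of `b` in
`t`: with `d = M⁶ + M² - 1`, it may be replaced by `b' = (M⁴ - 1)(M⁴ + d t⁴)`. The same rule turns
`-t²M⁴b'` into `g₂ / P`, because `1 + d = M²(M⁴ + 1)`, and `-(M² + 1)t²b'` into `g₄ / P`, because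
`(M² + 1)(M⁴ - 1)d ≡ 1` modulo `M⁴`. Finally `g₁ / P` and `g₃ / P` are combinations of `b'` and
`t²g₂ / P = -M¹⁰(1 + M⁴)(M⁴ - 1)t⁴`. The first makes the `t⁴`-terms cancel; the second, by a Bézout
relation between `d` and `M¹⁰(1 + M⁴)`, leaves the `t⁴`-coefficient `-(M⁴ - 1)`.
-/

noncomputable section

/-- `A₂ = t⁸M¹⁰A₁`. -/
def A2 : R2 := mon 8 10 * A1

/-- `B₂ = t⁸M¹⁰B₁`. -/
def B2 : R2 := mon 8 10 * B1

/-- The inclusion of the polynomial ring `ℂ[t, M]` (with `t = X 0`, `M = X 1`) into the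
Laurent polynomial ring `ℂ[t^{±1}, M^{±1}]`. -/
def φ : MvPolynomial (Fin 2) ℂ →ₐ[ℂ] R2 := MvPolynomial.aeval ![mon 1 0, mon 0 1]

/-- The variable `t` of the polynomial ring `ℂ[t, M]`. -/
def tP : MvPolynomial (Fin 2) ℂ := MvPolynomial.X 0

/-- The variable `M` of the polynomial ring `ℂ[t, M]`. -/
def MP : MvPolynomial (Fin 2) ℂ := MvPolynomial.X 1

/-- `g₁ = −M¹⁴(M⁸ − 1)(t⁴ + M⁸t⁴ − M⁴(1 + t⁸))` in `ℂ[t, M]`. -/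
def G1 : MvPolynomial (Fin 2) ℂ :=
  -MP ^ 14 * (MP ^ 8 - 1) * (tP ^ 4 + MP ^ 8 * tP ^ 4 - MP ^ 4 * (1 + tP ^ 8))

/-- `g₂ = −M¹⁰(M⁸ − 1)t²(t⁴ + M⁸t⁴ − M⁴(1 + t⁸))` in `ℂ[t, M]`. -/
def G2 : MvPolynomial (Fin 2) ℂ :=
  -MP ^ 10 * (MP ^ 8 - 1) * tP ^ 2 * (tP ^ 4 + MP ^ 8 * tP ^ 4 - MP ^ 4 * (1 + tP ^ 8))

/-- `g₃ = (M⁴ − 1)(M − t)(M + t)(Mt − 1)(Mt + 1)(M² + t²)(1 + M²t²)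
(M⁴ + M⁶ + M⁸ + 2M¹⁰ + 3M¹² + M¹⁴ + 2M¹⁶ − t⁴)` in `ℂ[t, M]`. -/
def G3 : MvPolynomial (Fin 2) ℂ :=
  (MP ^ 4 - 1) * (MP - tP) * (MP + tP) * (MP * tP - 1) * (MP * tP + 1) *
    (MP ^ 2 + tP ^ 2) * (1 + MP ^ 2 * tP ^ 2) *
    (MP ^ 4 + MP ^ 6 + MP ^ 8 + 2 * MP ^ 10 + 3 * MP ^ 12 + MP ^ 14 + 2 * MP ^ 16 - tP ^ 4)

/-- `g₄ = t²(t − M)(M + t)(Mt − 1)(Mt + 1)(M² + t²)(1 + M²t²)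
(−M⁴ − M⁶ − M⁸ + M¹⁴ + M¹⁶ + t⁴)` in `ℂ[t, M]`. -/
def G4 : MvPolynomial (Fin 2) ℂ :=
  tP ^ 2 * (tP - MP) * (MP + tP) * (MP * tP - 1) * (MP * tP + 1) *
    (MP ^ 2 + tP ^ 2) * (1 + MP ^ 2 * tP ^ 2) *
    (-MP ^ 4 - MP ^ 6 - MP ^ 8 + MP ^ 14 + MP ^ 16 + tP ^ 4)

section Residual

variable {R : Type*} [CommRing R] (t M : R)

/-- The factor `P` that `A₂`, `B₂` and all the `gᵢ` have in common, evaluated at elements `t`, `M`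
of a commutative ring. -/
def commonFactor : R := (M ^ 4 - t ^ 4) * (t ^ 4 * M ^ 4 - 1)

/-- The quotient `a = A₂ / P`. -/
def residualA : R := t ^ 2 * M ^ 4 * (t ^ 4 - M ^ 4)

/-- The quotient `b = B₂ / P`. -/
def residualB : R :=
  (M ^ 4 - 1) * (M ^ 4 * t ^ 8 + (-M ^ 8 + M ^ 6 + M ^ 2 - 1) * t ^ 4 + M ^ 4)

/-- The ideal `(a, b)` obtained from `(A₂, B₂)` by dividing out `P`. -/
def residualIdeal : Ideal R := Ideal.span {residualA t M, residualB t M}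

/-- The remainder `b'` of `b` modulo `a`. -/
def reducedB : R := (M ^ 4 - 1) * (M ^ 4 + (M ^ 6 + M ^ 2 - 1) * t ^ 4)

/-- The quotient `g₁ / P`. -/
def residualG1 : R := -(M ^ 14 * (M ^ 8 - 1))

/-- The quotient `g₂ / P`. -/
def residualG2 : R := -(M ^ 10 * (M ^ 8 - 1) * t ^ 2)

/-- The quotient `g₃ / P`. -/
def residualG3 : R :=
  (M ^ 4 - 1) *
    (M ^ 4 + M ^ 6 + M ^ 8 + 2 * M ^ 10 + 3 * M ^ 12 + M ^ 14 + 2 * M ^ 16 - t ^ 4)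

/-- The quotient `g₄ / P`. -/
def residualG4 : R := -(t ^ 2 * (-M ^ 4 - M ^ 6 - M ^ 8 + M ^ 14 + M ^ 16 + t ^ 4))

lemma residualA_mem_residualIdeal : residualA t M ∈ residualIdeal t M :=
  Ideal.subset_span (by simp)

lemma residualB_mem_residualIdeal : residualB t M ∈ residualIdeal t M :=
  Ideal.subset_span (by simp)

lemma reducedB_mem_residualIdeal : reducedB t M ∈ residualIdeal t M := by
  have h : reducedB t M = residualB t M - (M ^ 4 - 1) * t ^ 2 * residualA t M := by
    simp only [reducedB, residualA, residualB]
    ring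
  rw [h]
  exact sub_mem (residualB_mem_residualIdeal t M)
    (Ideal.mul_mem_left _ _ (residualA_mem_residualIdeal t M))

lemma residualG2_mem_residualIdeal : residualG2 t M ∈ residualIdeal t M := by
  have h : residualG2 t M =
      (M ^ 4 - 1) * (M ^ 6 + M ^ 2 - 1) * residualA t M - t ^ 2 * M ^ 4 * reducedB t M := by
    simp only [residualG2, reducedB, residualA]
    ring
  rw [h]
  exact sub_mem (Ideal.mul_mem_left _ _ (residualA_mem_residualIdeal t M))
    (Ideal.mul_mem_left _ _ (reducedB_mem_residualIdeal t M))

lemma residualG4_mem_residualIdeal : residualG4 t M ∈ residualIdeal t M := by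
  have h : residualG4 t M =
      (M ^ 8 + M ^ 6 - M ^ 2 - 2) * residualA t M - (M ^ 2 + 1) * t ^ 2 * reducedB t M := by
    simp only [residualG4, reducedB, residualA]
    ring
  rw [h]
  exact sub_mem (Ideal.mul_mem_left _ _ (residualA_mem_residualIdeal t M))
    (Ideal.mul_mem_left _ _ (reducedB_mem_residualIdeal t M))

lemma residualG1_mem_residualIdeal : residualG1 M ∈ residualIdeal t M := by
  have h : residualG1 M =
      -(M ^ 10 * (1 + M ^ 4)) * reducedB t M -
        (M ^ 6 + M ^ 2 - 1) * t ^ 2 * residualG2 t M := by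
    simp only [residualG1, residualG2, reducedB]
    ring
  rw [h]
  exact sub_mem (Ideal.mul_mem_left _ _ (reducedB_mem_residualIdeal t M))
    (Ideal.mul_mem_left _ _ (residualG2_mem_residualIdeal t M))

lemma residualG3_mem_residualIdeal : residualG3 t M ∈ residualIdeal t M := by
  set r := 1 + M ^ 2 + M ^ 4 + 2 * M ^ 6 + 3 * M ^ 8 + M ^ 10 + 2 * M ^ 12 with hr
  set k := 3 + M ^ 2 + 2 * M ^ 4 with hk
  have bezout : k * (M ^ 10 * (1 + M ^ 4)) - r * (M ^ 6 + M ^ 2 - 1) = 1 := by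
    rw [hr, hk]
    ring
  have h_eq_r : residualG3 t M = (M ^ 4 - 1) * (M ^ 4 * r - t ^ 4) := by
    rw [residualG3, hr]
    ring
  have h : residualG3 t M = r * reducedB t M + k * t ^ 2 * residualG2 t M := by
    rw [h_eq_r, reducedB, residualG2]
    linear_combination (M ^ 4 - 1) * t ^ 4 * bezout
  rw [h]
  exact add_mem (Ideal.mul_mem_left _ _ (reducedB_mem_residualIdeal t M))
    (Ideal.mul_mem_left _ _ (residualG2_mem_residualIdeal t M))

end Residual

lemma G1_eq_commonFactor_mul : G1 = commonFactor tP MP * residualG1 MP := by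
  simp only [G1, commonFactor, residualG1]
  ring

lemma G2_eq_commonFactor_mul : G2 = commonFactor tP MP * residualG2 tP MP := by
  simp only [G2, commonFactor, residualG2]
  ring

lemma G3_eq_commonFactor_mul : G3 = commonFactor tP MP * residualG3 tP MP := by
  simp only [G3, commonFactor, residualG3]
  ring

lemma G4_eq_commonFactor_mul : G4 = commonFactor tP MP * residualG4 tP MP := by
  simp only [G4, commonFactor, residualG4]
  ring

lemma mul_mem_span_pair_mul {R : Type*} [CommSemiring R] {a b x : R} (c : R)
    (hx : x ∈ Ideal.span {a, b}) : c * x ∈ Ideal.span {c * a, c * b} := by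
  obtain ⟨u, v, rfl⟩ := Ideal.mem_span_pair.mp hx
  exact Ideal.mem_span_pair.mpr ⟨u, v, by ring⟩

lemma mon_mul_mon (a b c d : ℤ) : mon a b * mon c d = mon (a + c) (b + d) := by
  simp [mon, AddMonoidAlgebra.single_mul_single]

lemma mon_zero_zero : mon 0 0 = 1 := rfl

lemma mon_pow (a b : ℤ) (n : ℕ) : mon a b ^ n = mon (n * a) (n * b) := by
  simp [mon, AddMonoidAlgebra.single_pow]

lemma sU_mon (a b : ℤ) : sU (mon a b) = mon (a + 2 * b) b := by
  simp [sU, mon, eU]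

lemma sD_mon (a b : ℤ) : sD (mon a b) = mon (a - 2 * b) b := by
  simp [sD, mon, eD]

lemma φ_tP : φ tP = mon 1 0 := by simp [φ, tP]

lemma φ_MP : φ MP = mon 0 1 := by simp [φ, MP]

lemma mon_mul_a1 : mon 2 2 * a1 = φ (MP ^ 4 - tP ^ 4) := by
  simp [a1, φ_tP, φ_MP, mul_sub, mon_pow, mon_mul_mon]

lemma mon_mul_sU_a1 : mon 2 2 * sU a1 = φ (tP ^ 4 * MP ^ 4 - 1) := by
  simp [a1, φ_tP, φ_MP, mul_sub, mon_pow, mon_mul_mon, sU_mon, mon_zero_zero]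

lemma mon_mul_sD_am1 : mon 2 2 * sD am1 = φ (MP ^ 4 - tP ^ 4) := by
  simp [am1, φ_tP, φ_MP, mul_sub, mon_pow, mon_mul_mon, sD_mon]

lemma mon_mul_a0 : mon 4 6 * a0 = φ (residualB tP MP) := by
  have h_outer : mon 0 2 * (mon 0 2 - mon 0 (-2)) = φ (MP ^ 4 - 1) := by
    simp [φ_MP, mul_sub, mon_pow, mon_mul_mon, mon_zero_zero]
  have h_inner : mon 4 4 *
      (-(mon 0 4) - mon 0 (-4) + mon 0 2 + mon 0 (-2) + mon 4 0 + mon (-4) 0) =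
        φ (MP ^ 4 * tP ^ 8 + (-MP ^ 8 + MP ^ 6 + MP ^ 2 - 1) * tP ^ 4 + MP ^ 4) := by
    simp [φ_tP, φ_MP, mul_sub, mul_add, sub_mul, add_mul, mon_pow, mon_mul_mon]
    abel
  calc mon 4 6 * a0 = mon 0 2 * mon 4 4 * a0 := by simp [mon_mul_mon]
    _ = φ (residualB tP MP) := by
      rw [a0, residualB, map_mul, ← h_outer, ← h_inner, mul_mul_mul_comm]

lemma φ_commonFactor_mul_residualA : φ (commonFactor tP MP * residualA tP MP) = A2 := by
  have h_mon : mon 8 10 = φ (tP ^ 2 * MP ^ 4) * mon 2 2 ^ 3 := by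
    simp [φ_tP, φ_MP, mon_pow, mon_mul_mon]
  calc φ (commonFactor tP MP * residualA tP MP)
      = φ (tP ^ 2 * MP ^ 4) *
          -(φ (MP ^ 4 - tP ^ 4) * φ (tP ^ 4 * MP ^ 4 - 1) * φ (MP ^ 4 - tP ^ 4)) := by
        simp only [commonFactor, residualA, map_mul, map_sub]
        ring
    _ = φ (tP ^ 2 * MP ^ 4) * -(mon 2 2 * a1 * (mon 2 2 * sU a1) * (mon 2 2 * sD am1)) := by
        rw [mon_mul_a1, mon_mul_sU_a1, mon_mul_sD_am1]
    _ = A2 := by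
        rw [A2, A1, h_mon]
        ring

lemma φ_commonFactor_mul_residualB : φ (commonFactor tP MP * residualB tP MP) = B2 := by
  have h_mon : mon 8 10 = mon 4 6 * mon 2 2 ^ 2 := by
    simp [mon_pow, mon_mul_mon]
  calc φ (commonFactor tP MP * residualB tP MP)
      = φ (MP ^ 4 - tP ^ 4) * φ (tP ^ 4 * MP ^ 4 - 1) * φ (residualB tP MP) := by
        rw [commonFactor, map_mul, map_mul]
    _ = B2 := by
        rw [← mon_mul_sD_am1, ← mon_mul_sU_a1, ← mon_mul_a0, B2, B1, h_mon]
        ring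

/-- `A₂` and `B₂` are (the images of) polynomials in `ℂ[t, M]`, and each of `g₁, g₂, g₃, g₄`
lies in the ideal of the polynomial ring `ℂ[t, M]` generated by `A₂` and `B₂`. -/
theorem groebner_basis_mem_span :
    ∃ A2' B2' : MvPolynomial (Fin 2) ℂ, φ A2' = A2 ∧ φ B2' = B2 ∧
      G1 ∈ Ideal.span ({A2', B2'} : Set (MvPolynomial (Fin 2) ℂ)) ∧
      G2 ∈ Ideal.span ({A2', B2'} : Set (MvPolynomial (Fin 2) ℂ)) ∧
      G3 ∈ Ideal.span ({A2', B2'} : Set (MvPolynomial (Fin 2) ℂ)) ∧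
      G4 ∈ Ideal.span ({A2', B2'} : Set (MvPolynomial (Fin 2) ℂ)) := by
  refine ⟨commonFactor tP MP * residualA tP MP, commonFactor tP MP * residualB tP MP,
    φ_commonFactor_mul_residualA, φ_commonFactor_mul_residualB, ?_, ?_, ?_, ?_⟩
  · rw [G1_eq_commonFactor_mul]
    exact mul_mem_span_pair_mul _ (residualG1_mem_residualIdeal tP MP)
  · rw [G2_eq_commonFactor_mul]
    exact mul_mem_span_pair_mul _ (residualG2_mem_residualIdeal tP MP)
  · rw [G3_eq_commonFactor_mul]
    exact mul_mem_span_pair_mul _ (residualG3_mem_residualIdeal tP MP)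
  · rw [G4_eq_commonFactor_mul]
    exact mul_mem_span_pair_mul _ (residualG4_mem_residualIdeal tP MP)
end
end

section
/- In the Laurent polynomial ring ℂ[M^{±1}, L^{±1}] (two commuting variables M, L over ℂ), the identity L² + L⁻² + p₁(1,M)·L + p₋₁(1,M)·L⁻¹ + p₀(1,M) = (L + L⁻¹ − M⁴ − M⁻⁴ + M² + M⁻² + 2)² holds, where p_i(1,M) denotes the image of p_i under the substitution t ↦ 1. In particular p₁(1,M) = p₋₁(1,M) = −2M⁴ − 2M⁻⁴ + 2M² + 2M⁻² + 4 and p₀(1,M) = M⁸ + M⁻⁸ − 2M⁶ − 2M⁻⁶ − 3M⁴ − 3M⁻⁴ + 2M² + 2M⁻² + 10. -/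
/-!
Write `A' = L + L⁻¹ + a` with `a = -M⁴ - M⁻⁴ + M² + M⁻² + 2`. Since `L * L⁻¹ = 1`, the square
of `A'` has `L^{±2}` coefficient `1`, `L^{±1}` coefficient `2a` and `L⁰` coefficient `a² + 2`. On
the other side, let `q = M⁴ a = -1 + M² + 2M⁴ + M⁶ - M⁸`. At `t = 1` the bracketed factors of `p₁`
and `p₋₁` both become `2q`, and that of `p₀` becomes `q² + 2M⁸`; dividing by `M⁴`, respectively
`M⁸`, gives the same three coefficients.
-/

noncomputable section

/-- `p₁(t,M) = M⁻⁴t⁻¹⁰·(−1 − t¹⁶ + M⁴t⁸(1+t⁴)² + M²(t⁴+t¹²) + M⁶(t⁸+t¹⁶) − M⁸(t¹²+t²⁰))`. -/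
def P1 : R2 :=
  mon (-10) (-4) *
    (-1 - mon 16 0 + mon 8 4 * (1 + mon 4 0) ^ 2 + mon 0 2 * (mon 4 0 + mon 12 0)
      + mon 0 6 * (mon 8 0 + mon 16 0) - mon 0 8 * (mon 12 0 + mon 20 0))

/-- `p₋₁(t,M) = M⁻⁴t⁻¹⁰·(M⁴t⁸(1+t⁴)² − t¹²(1+t⁸) + M⁶(t⁴+t¹²) − M⁸(1+t¹⁶) + M²(t⁸+t¹⁶))`. -/
def Pm1 : R2 :=
  mon (-10) (-4) *
    (mon 8 4 * (1 + mon 4 0) ^ 2 - mon 12 0 * (1 + mon 8 0) + mon 0 6 * (mon 4 0 + mon 12 0)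
      - mon 0 8 * (1 + mon 16 0) + mon 0 2 * (mon 8 0 + mon 16 0))

/-- `p₀(t,M) = M⁻⁸t⁻⁴·(t⁸ + M¹⁶t⁸ − M⁴t⁸(2+t⁴) − M¹²t⁸(2+t⁴) − M²(t⁴+t⁸) + M⁶(t⁴+t⁸)
    + M¹⁰(t⁴+t⁸) − M¹⁴(t⁴+t⁸) + 2M⁸(1+t⁴+2t⁸+t¹²))`. -/
def P0 : R2 :=
  mon (-4) (-8) *
    (mon 8 0 + mon 8 16 - mon 8 4 * (2 + mon 4 0) - mon 8 12 * (2 + mon 4 0)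
      - mon 0 2 * (mon 4 0 + mon 8 0) + mon 0 6 * (mon 4 0 + mon 8 0)
      + mon 0 10 * (mon 4 0 + mon 8 0) - mon 0 14 * (mon 4 0 + mon 8 0)
      + 2 * mon 0 8 * (1 + mon 4 0 + 2 * mon 8 0 + mon 12 0))

/-- The substitution ring homomorphism `t ↦ 1`, from `ℂ[t^{±1}, M^{±1}]` onto `ℂ[M^{±1}]`
(the latter realized as the Laurent polynomial ring `LaurentPolynomial ℂ`). -/
def ev1 : R2 →+* LaurentPolynomial ℂ :=
  AddMonoidAlgebra.mapDomainRingHom ℂ (AddMonoidHom.snd ℤ ℤ)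

/-- `ã₁(M) = −2M⁴ − 2M⁻⁴ + 2M² + 2M⁻² + 4` in `ℂ[M^{±1}]`. -/
def ta1 : LaurentPolynomial ℂ :=
  -2 * LaurentPolynomial.T 4 - 2 * LaurentPolynomial.T (-4)
    + 2 * LaurentPolynomial.T 2 + 2 * LaurentPolynomial.T (-2) + 4

/-- `ã₀(M) = M⁸ + M⁻⁸ − 2M⁶ − 2M⁻⁶ − 3M⁴ − 3M⁻⁴ + 2M² + 2M⁻² + 10` in `ℂ[M^{±1}]`. -/
def ta0 : LaurentPolynomial ℂ :=
  LaurentPolynomial.T 8 + LaurentPolynomial.T (-8)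
    - 2 * LaurentPolynomial.T 6 - 2 * LaurentPolynomial.T (-6)
    - 3 * LaurentPolynomial.T 4 - 3 * LaurentPolynomial.T (-4)
    + 2 * LaurentPolynomial.T 2 + 2 * LaurentPolynomial.T (-2) + 10

/-- The Laurent polynomial ring `ℂ[M^{±1}, L^{±1}]`, realized as the group algebra of `ℤ × ℤ`
over `ℂ`.  The element `monML a b` below is the monomial `M^a * L^b`. -/
abbrev SML : Type := AddMonoidAlgebra ℂ (ℤ × ℤ)

/-- The monomial `M^a * L^b` in `ℂ[M^{±1}, L^{±1}]`. -/
def monML (a b : ℤ) : SML := AddMonoidAlgebra.single (a, b) (1 : ℂ)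

/-- The inclusion `ℂ[M^{±1}] → ℂ[M^{±1}, L^{±1}]`. -/
def inclM : LaurentPolynomial ℂ →+* SML :=
  AddMonoidAlgebra.mapDomainRingHom ℂ (AddMonoidHom.inl ℤ ℤ)

lemma add_add_sq_of_mul_eq_one {R : Type*} [CommSemiring R] {x y : R} (h : x * y = 1) (a : R) :
    (x + y + a) ^ 2 = x ^ 2 + y ^ 2 + 2 * a * x + 2 * a * y + (a ^ 2 + 2) := by
  calc (x + y + a) ^ 2
      = x ^ 2 + y ^ 2 + 2 * a * x + 2 * a * y + (a ^ 2 + 2 * (x * y)) := by ring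
    _ = x ^ 2 + y ^ 2 + 2 * a * x + 2 * a * y + (a ^ 2 + 2) := by rw [h, mul_one]

section

open LaurentPolynomial

lemma T_ofNat_eq_pow {R : Type*} [Semiring R] (n : ℕ) [n.AtLeastTwo] :
    (T ofNat(n) : R[T;T⁻¹]) = T 1 ^ n := by
  rw [T_pow, mul_one]; rfl

lemma T_neg_ofNat_eq_pow {R : Type*} [Semiring R] (n : ℕ) [n.AtLeastTwo] :
    (T (-ofNat(n)) : R[T;T⁻¹]) = T (-1) ^ n := by
  rw [T_pow, mul_neg_one]; rfl

lemma T_one_mul_T_neg_one {R : Type*} [Semiring R] : (T 1 : R[T;T⁻¹]) * T (-1) = 1 := by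
  rw [← T_add, add_neg_cancel, T_zero]

lemma ev1_mon (a b : ℤ) : ev1 (mon a b) = T b :=
  AddMonoidAlgebra.mapDomain_single

lemma inclM_T (n : ℤ) : inclM (T n) = monML n 0 :=
  AddMonoidAlgebra.mapDomain_single

lemma monML_mul_monML (a b c d : ℤ) : monML a b * monML c d = monML (a + c) (b + d) := by
  simp only [monML, AddMonoidAlgebra.single_mul_single, Prod.mk_add_mk, mul_one]

lemma monML_mul_monML_neg (a b : ℤ) : monML a b * monML (-a) (-b) = 1 := by
  rw [monML_mul_monML, add_neg_cancel, add_neg_cancel]; rfl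

/-- The part `a` of the nonabelian A-polynomial `A' = L + L⁻¹ + a` of the figure-eight knot that
does not involve `L`. -/
def aPolyConst : ℂ[T;T⁻¹] := -T 4 - T (-4) + T 2 + T (-2) + 2

/-- The polynomial `q = M⁴ a` obtained from `a = aPolyConst` by clearing denominators. -/
def aPolyNum : ℂ[T;T⁻¹] := -1 + T 2 + 2 * T 4 + T 6 - T 8

lemma T_neg_four_mul_aPolyNum : T (-4) * aPolyNum = aPolyConst := by
  have h₂ : (T (-4) : ℂ[T;T⁻¹]) * T 2 = T (-2) := (T_add _ _).symm
  have h₄ : (T (-4) : ℂ[T;T⁻¹]) * T 4 = 1 := (T_add _ _).symm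
  have h₆ : (T (-4) : ℂ[T;T⁻¹]) * T 6 = T 2 := (T_add _ _).symm
  have h₈ : (T (-4) : ℂ[T;T⁻¹]) * T 8 = T 4 := (T_add _ _).symm
  rw [aPolyNum, aPolyConst]
  linear_combination h₂ + 2 * h₄ + h₆ - h₈

lemma ta1_eq_two_mul : ta1 = 2 * aPolyConst := by
  rw [ta1, aPolyConst]; ring

lemma ta0_eq_sq_add_two : ta0 = aPolyConst ^ 2 + 2 := by
  have h : (T 1 : ℂ[T;T⁻¹]) ^ 2 * T (-1) ^ 2 = 1 := by
    rw [← mul_pow, T_one_mul_T_neg_one, one_pow]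
  simp only [ta0, aPolyConst, T_ofNat_eq_pow, T_neg_ofNat_eq_pow]
  -- The coefficient of `h` collects the products of `M^i` and `M^{-j}` in `a²`, `i, j ∈ {2, 4}`.
  linear_combination
    -(4 - 2 * T 1 ^ 2 - 2 * T (-1) ^ 2 + 2 * T 1 ^ 2 * T (-1) ^ 2) * h

lemma ev1_P1 : ev1 P1 = 2 * aPolyConst := by
  rw [← T_neg_four_mul_aPolyNum]
  simp only [P1, aPolyNum, map_mul, map_add, map_sub, map_neg, map_pow, map_one, ev1_mon, T_zero]
  ring

lemma ev1_Pm1 : ev1 Pm1 = 2 * aPolyConst := by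
  rw [← T_neg_four_mul_aPolyNum]
  simp only [Pm1, aPolyNum, map_mul, map_add, map_sub, map_pow, map_one, ev1_mon, T_zero]
  ring

lemma ev1_P0 : ev1 P0 = aPolyConst ^ 2 + 2 := by
  have h : (T (-8) : ℂ[T;T⁻¹]) * T 8 = 1 := (T_add _ _).symm
  have h_sq : (T (-8) : ℂ[T;T⁻¹]) = T (-4) * T (-4) := by rw [← T_add]; rfl
  calc ev1 P0 = T (-8) * (aPolyNum ^ 2 + 2 * T 8) := by
        simp only [P0, aPolyNum, map_mul, map_add, map_sub, map_one, map_ofNat, ev1_mon, T_zero,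
          T_ofNat_eq_pow]
        ring
    _ = (T (-4) * aPolyNum) ^ 2 + 2 := by
        linear_combination aPolyNum ^ 2 * h_sq + 2 * h
    _ = aPolyConst ^ 2 + 2 := by rw [T_neg_four_mul_aPolyNum]

lemma inclM_aPolyConst :
    inclM aPolyConst = -monML 4 0 - monML (-4) 0 + monML 2 0 + monML (-2) 0 + 2 := by
  simp only [aPolyConst, map_add, map_sub, map_neg, map_ofNat, inclM_T]

end

/-- Setting `t = 1` in the recurrence polynomial `P` yields the square of the nonabelian
A-polynomial of the figure-eight knot:
`L² + L⁻² + p₁(1,M)L + p₋₁(1,M)L⁻¹ + p₀(1,M) = (L + L⁻¹ − M⁴ − M⁻⁴ + M² + M⁻² + 2)²`,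
and in particular `p₁(1,M) = p₋₁(1,M) = −2M⁴ − 2M⁻⁴ + 2M² + 2M⁻² + 4` and
`p₀(1,M) = M⁸ + M⁻⁸ − 2M⁶ − 2M⁻⁶ − 3M⁴ − 3M⁻⁴ + 2M² + 2M⁻² + 10`. -/
theorem epsilon_P_eq_A_poly_squared :
    (monML 0 2 + monML 0 (-2) + inclM (ev1 P1) * monML 0 1 + inclM (ev1 Pm1) * monML 0 (-1)
        + inclM (ev1 P0) =
      (monML 0 1 + monML 0 (-1) - monML 4 0 - monML (-4) 0 + monML 2 0 + monML (-2) 0 + 2) ^ 2)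
      ∧ ev1 P1 = ta1 ∧ ev1 Pm1 = ta1 ∧ ev1 P0 = ta0 := by
  refine ⟨?_, ev1_P1.trans ta1_eq_two_mul.symm, ev1_Pm1.trans ta1_eq_two_mul.symm,
    ev1_P0.trans ta0_eq_sq_add_two.symm⟩
  have hL : monML 0 1 * monML 0 (-1) = 1 := monML_mul_monML_neg 0 1
  have hL_sq : monML 0 2 = monML 0 1 ^ 2 := by rw [sq, monML_mul_monML]; rfl
  have hL_inv_sq : monML 0 (-2) = monML 0 (-1) ^ 2 := by rw [sq, monML_mul_monML]; rfl
  calc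
    _ = monML 0 1 ^ 2 + monML 0 (-1) ^ 2 + 2 * inclM aPolyConst * monML 0 1
          + 2 * inclM aPolyConst * monML 0 (-1) + (inclM aPolyConst ^ 2 + 2) := by
      simp only [ev1_P1, ev1_Pm1, ev1_P0, hL_sq, hL_inv_sq, map_mul, map_add, map_pow, map_ofNat]
    _ = (monML 0 1 + monML 0 (-1) + inclM aPolyConst) ^ 2 :=
      (add_add_sq_of_mul_eq_one hL _).symm
    _ = _ := by rw [inclM_aPolyConst]; ring
end
end
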